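/- Let V be a variety with a weak f-term and A ∈ V. If θ,θ₁,…,θₙ are congruences of A with each θ_i ≤ θ and f(θ) = 0_A, then the congruence of A generated by T^θ_{n,f}(θ₁,…,θₙ) equals the higher commutator [θ₁,…,θₙ]. -/

import Mathlib

set_option autoImplicit false

namespace UA

/-- A signature: a type of operation symbols, each with a finite arity. -/
structure Signature : Type 1 where
  ops : Type
  arity : ops → ℕ

/-- An algebra for a signature: a carrier set together with an interpretation
of every operation symbol. -/
structure Algebra (σ : Signature) : Type 1 where
  carrier : Type
  interp : (o : σ.ops) → (Fin (σ.arity o) → carrier) → carrier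

variable {σ : Signature}

/-- A congruence of an algebra: an equivalence relation compatible with all
basic operations. -/
structure Con (A : Algebra σ) : Type where
  r : A.carrier → A.carrier → Prop
  refl : ∀ a, r a a
  symm : ∀ {a b}, r a b → r b a
  trans : ∀ {a b c}, r a b → r b c → r a c
  compat : ∀ (o : σ.ops) (x y : Fin (σ.arity o) → A.carrier),
      (∀ i, r (x i) (y i)) → r (A.interp o x) (A.interp o y)

namespace Con

variable {A : Algebra σ}

instance : LE (Con A) := ⟨fun c d => ∀ a b : A.carrier, c.r a b → d.r a b⟩
instance : LT (Con A) := ⟨fun c d => c ≤ d ∧ ¬ d ≤ c⟩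

/-- The total congruence `1_A`. -/
def top : Con A where
  r := fun _ _ => True
  refl := fun _ => trivial
  symm := fun _ => trivial
  trans := fun _ _ => trivial
  compat := fun _ _ _ _ => trivial

/-- The identity congruence `0_A`. -/
def bot : Con A where
  r := fun a b => a = b
  refl := fun _ => rfl
  symm := fun h => h.symm
  trans := fun h h' => h.trans h'
  compat := fun o _ _ h => congrArg (A.interp o) (funext h)

/-- Meet of an arbitrary family of congruences (intersection). -/
def sInf (S : Set (Con A)) : Con A where
  r a b := ∀ c ∈ S, c.r a b
  refl a c _ := c.refl a
  symm h c hc := c.symm (h c hc)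
  trans h h' c hc := c.trans (h c hc) (h' c hc)
  compat o x y h c hc := c.compat o x y (fun i => h i c hc)

/-- Binary meet of congruences. -/
def inf (c d : Con A) : Con A where
  r a b := c.r a b ∧ d.r a b
  refl a := ⟨c.refl a, d.refl a⟩
  symm h := ⟨c.symm h.1, d.symm h.2⟩
  trans h h' := ⟨c.trans h.1 h'.1, d.trans h.2 h'.2⟩
  compat o x y h := ⟨c.compat o x y fun i => (h i).1, d.compat o x y fun i => (h i).2⟩

/-- The congruence generated by a set of pairs. -/
def conGen (S : Set (A.carrier × A.carrier)) : Con A :=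
  sInf {c : Con A | ∀ p ∈ S, c.r p.1 p.2}

/-- Binary join of congruences. -/
def sup (c d : Con A) : Con A := conGen {p | c.r p.1 p.2 ∨ d.r p.1 p.2}

/-- Join of a family of congruences. -/
def iSup {I : Type} (f : I → Con A) : Con A := conGen {p | ∃ i, (f i).r p.1 p.2}

/-- Composition of congruences as binary relations. -/
def comp (c d : Con A) (a b : A.carrier) : Prop := ∃ x, c.r a x ∧ d.r x b

/-- `d` covers `c` in the congruence lattice. -/
def Covers (c d : Con A) : Prop := c < d ∧ ∀ e : Con A, c < e → e ≤ d → e = d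

theorem le_sup_right {c d : Con A} : d ≤ sup c d :=
  fun a b h e he => he (a, b) (Or.inr h)

def toSetoid (c : Con A) : Setoid A.carrier := ⟨c.r, ⟨c.refl, c.symm, c.trans⟩⟩

end Con

/-- The quotient algebra `A/γ`. -/
noncomputable def quotAlg (A : Algebra σ) (γ : Con A) : Algebra σ where
  carrier := Quotient γ.toSetoid
  interp o x := Quotient.mk γ.toSetoid (A.interp o (fun i => (x i).out))

/-- The quotient congruence `α/γ` for `γ ≤ α`. -/
noncomputable def Con.quot {A : Algebra σ} (α γ : Con A) (h : γ ≤ α) : Con (quotAlg A γ) where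
  r x y := Quotient.liftOn₂ x y (fun a b => α.r a b)
    (fun a b a' b' ha hb => propext
      ⟨fun hr => α.trans (α.symm (h _ _ ha)) (α.trans hr (h _ _ hb)),
       fun hr => α.trans (h _ _ ha) (α.trans hr (α.symm (h _ _ hb)))⟩)
  refl x := Quotient.inductionOn x fun a => α.refl a
  symm {x y} h' := Quotient.inductionOn₂ x y (fun _ _ hab => α.symm hab) h'
  trans {x y z} h1 h2 :=
    Quotient.inductionOn₃ x y z (fun _ _ _ hab hbc => α.trans hab hbc) h1 h2
  compat o x y hxy := by
    show α.r (A.interp o fun i => (x i).out) (A.interp o fun i => (y i).out)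
    refine α.compat o _ _ fun i => ?_
    have h1 := hxy i
    rw [← Quotient.out_eq (x i), ← Quotient.out_eq (y i)] at h1
    exact h1

/-- The polynomial operations of an algebra: the clone generated by the basic
operations, the projections and the constants. -/
inductive IsPolynomial (A : Algebra σ) : {n : ℕ} → ((Fin n → A.carrier) → A.carrier) → Prop
  | proj {n : ℕ} (i : Fin n) : IsPolynomial A (fun x => x i)
  | const {n : ℕ} (a : A.carrier) : IsPolynomial A (fun _ : Fin n → A.carrier => a)
  | app {n : ℕ} (o : σ.ops) (g : Fin (σ.arity o) → (Fin n → A.carrier) → A.carrier) :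
      (∀ j, IsPolynomial A (g j)) → IsPolynomial A (fun x => A.interp o (fun j => g j x))

/-- Substituting, coordinatewise according to the grouping `g` and the choice
vector `ε`, the entries of `b` (where `ε` is `true`) or of `a` (where `ε` is `false`). -/
def chooseVec {β : Type} {N n : ℕ} (g : Fin N → Fin n) (a b : Fin N → β)
    (ε : Fin n → Bool) : Fin N → β :=
  fun i => if ε (g i) then b i else a i

/-- The higher centralizer relation `C(α₁,…,αₙ,β;δ)` of Bulatov.  Polynomials with
grouped variables are modelled by a polynomial `p` of arity `N` together with a
grouping map `g : Fin N → Fin (n+1)`; the group `Fin.last n` is the `β`-group. -/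
def Centralizes {A : Algebra σ} {n : ℕ} (α : Fin n → Con A) (β δ : Con A) : Prop :=
  ∀ (N : ℕ) (p : (Fin N → A.carrier) → A.carrier), IsPolynomial A p →
    ∀ (g : Fin N → Fin (n + 1)) (a b : Fin N → A.carrier),
      (∀ i, (Fin.lastCases (motive := fun _ => Con A) β α (g i)).r (a i) (b i)) →
      (∀ ε : Fin n → Bool, ε ≠ (fun _ => true) →
        δ.r (p (chooseVec g a b (Fin.lastCases (motive := fun _ => Bool) false ε)))
            (p (chooseVec g a b (Fin.lastCases (motive := fun _ => Bool) true ε)))) →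
      δ.r (p (chooseVec g a b (Fin.lastCases (motive := fun _ => Bool) false fun _ => true)))
          (p (chooseVec g a b (Fin.lastCases (motive := fun _ => Bool) true fun _ => true)))

/-- The higher commutator `[α₁,…,αₙ,β]`: the smallest congruence `δ` such that
`C(α₁,…,αₙ,β;δ)` holds. -/
def commutator {A : Algebra σ} {n : ℕ} (α : Fin n → Con A) (β : Con A) : Con A :=
  Con.sInf {δ : Con A | Centralizes α β δ}

/-- The higher commutator of a nonempty list of congruences, with the convention
`[α] = α` for a single congruence. -/
def commList {A : Algebra σ} : {n : ℕ} → (Fin (n + 1) → Con A) → Con A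
  | 0, γ => γ 0
  | (n+1), γ => commutator (fun j : Fin (n+1) => γ j.castSucc) (γ (Fin.last (n+1)))

/-- The `m`-fold commutator `[θ,…,θ]_m` (for `m ≥ 1`). -/
def nfold {A : Algebra σ} (θ : Con A) (m : ℕ) : Con A :=
  commList (fun _ : Fin (m - 1 + 1) => θ)

/-- The binary commutator `[c,d]`. -/
def binComm {A : Algebra σ} (c d : Con A) : Con A := commutator (fun _ : Fin 1 => c) d

/-- The lower central series `(θ]ⁿ`. -/
def lcs {A : Algebra σ} (θ : Con A) : ℕ → Con A
  | 0 => θ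
  | (k+1) => binComm θ (lcs θ k)

/-- The derived series `[θ]ⁿ`. -/
def derived {A : Algebra σ} (θ : Con A) : ℕ → Con A
  | 0 => θ
  | (k+1) => binComm (derived θ k) (derived θ k)

/-- An algebra is nilpotent if some term of the lower central series of `1_A` is `0_A`. -/
def Nilpotent (A : Algebra σ) : Prop := ∃ m, lcs (Con.top : Con A) m = Con.bot

/-- An algebra is nilpotent of class `n` if `(1_A]ⁿ = 0_A`. -/
def NilpotentOfClass (A : Algebra σ) (n : ℕ) : Prop := lcs (Con.top : Con A) n = Con.bot

/-- A congruence is solvable if some term of its derived series is `0_A`. -/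
def SolvableCon {A : Algebra σ} (θ : Con A) : Prop := ∃ m, derived θ m = Con.bot

/-- `A` is `n`-supernilpotent if `[1_A,…,1_A]_n = 0_A`. -/
def Supernilpotent (A : Algebra σ) (n : ℕ) : Prop := nfold (Con.top : Con A) n = Con.bot

/-- A polynomial `f` absorbs the tuple `a` to the element `c`. -/
def Absorbs (A : Algebra σ) {k : ℕ} (f : (Fin k → A.carrier) → A.carrier)
    (a : Fin k → A.carrier) (c : A.carrier) : Prop :=
  ∀ b : Fin k → A.carrier, (∃ i, b i = a i) → f b = c

/-- Terms over a signature with variables in `X`. -/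
inductive Term (σ : Signature) (X : Type) : Type
  | var : X → Term σ X
  | app : (o : σ.ops) → (Fin (σ.arity o) → Term σ X) → Term σ X

/-- Evaluation of a term in an algebra under an assignment of the variables. -/
def Term.eval {X : Type} (A : Algebra σ) (v : X → A.carrier) : Term σ X → A.carrier
  | Term.var x => v x
  | Term.app o t => A.interp o fun i => Term.eval A v (t i)

/-- Substitution of terms into a term. -/
def Term.subst {X Y : Type} : Term σ X → (X → Term σ Y) → Term σ Y
  | Term.var x, s => s x
  | Term.app o t, s => Term.app o fun i => Term.subst (t i) s

/-- `A` possesses a Mal'cev term. -/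
def HasMalcevTerm (A : Algebra σ) : Prop :=
  ∃ t : Term σ (Fin 3), ∀ a b : A.carrier,
    t.eval A ![a, b, b] = a ∧ t.eval A ![b, b, a] = a

/-- A class of algebras is a variety when it is the class of all models of a set
of identities. -/
def IsVariety (V : Algebra σ → Prop) : Prop :=
  ∃ E : Set (Term σ ℕ × Term σ ℕ),
    ∀ A : Algebra σ, V A ↔ ∀ e ∈ E, ∀ v : ℕ → A.carrier, e.1.eval A v = e.2.eval A v

/-- Two terms are `V`-equivalent when they evaluate equally in every member of `V`. -/
def vSetoid (V : Algebra σ → Prop) (X : Type) : Setoid (Term σ X) where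
  r t s := ∀ A : Algebra σ, V A → ∀ v : X → A.carrier, t.eval A v = s.eval A v
  iseqv := ⟨fun _ _ _ _ => rfl, fun h A hA v => (h A hA v).symm,
    fun h h' A hA v => (h A hA v).trans (h' A hA v)⟩

/-- The `V`-free algebra on the set `X` of generators. -/
noncomputable def freeAlg (V : Algebra σ → Prop) (X : Type) : Algebra σ where
  carrier := Quotient (vSetoid V X)
  interp o x := Quotient.mk (vSetoid V X) (Term.app o fun i => (x i).out)

/-- The principal congruence `θ(a,b)` generated by the pair `(a,b)`. -/
def conPair (A : Algebra σ) (a b : A.carrier) : Con A := Con.conGen {(a, b)}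

/-- A weak difference term for the class `V`. -/
def IsWeakDiffTerm (V : Algebra σ → Prop) (c : Term σ (Fin 3)) : Prop :=
  ∀ A : Algebra σ, V A → ∀ a b : A.carrier,
    (binComm (conPair A a b) (conPair A a b)).r (c.eval A ![a, b, b]) a ∧
    (binComm (conPair A a b) (conPair A a b)).r a (c.eval A ![b, b, a])

/-- A weak `n`-difference term for the class `V`. -/
def IsWeakNDiffTerm (V : Algebra σ → Prop) (n : ℕ) (c : Term σ (Fin 3)) : Prop :=
  ∀ A : Algebra σ, V A → ∀ a b : A.carrier,
    (nfold (conPair A a b) n).r (c.eval A ![a, b, b]) a ∧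
    (nfold (conPair A a b) n).r a (c.eval A ![b, b, a])

/-- Order-preserving maps on the congruence lattice. -/
def MonotoneCon {A : Algebra σ} (F : Con A → Con A) : Prop :=
  ∀ c d : Con A, c ≤ d → F c ≤ F d

/-- `p` is a weak `f`-term of `A` with respect to the interpretation `F`. -/
def IsWeakFTerm (A : Algebra σ) (F : Con A → Con A) (p : Term σ (Fin 3)) : Prop :=
  ∀ (θ : Con A) (a b : A.carrier), θ.r a b →
    (F θ).r (p.eval A ![a, b, b]) a ∧ (F θ).r a (p.eval A ![b, b, a])

/-- `p` is a weak `f`-term for the class `V`. -/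
def HasWeakFTermVariety (V : Algebra σ → Prop) (p : Term σ (Fin 3)) : Prop :=
  ∀ A : Algebra σ, V A → ∃ F : Con A → Con A, MonotoneCon F ∧ IsWeakFTerm A F p

/-- The set `T^θ_{n,f}(θ₁,…,θₙ)` of pairs coming from polynomials which
`f(θ)`-absorb on the cube `{ā₁,b̄₁}×⋯×{āₙ,b̄ₙ}`. -/
def TSet (A : Algebra σ) (F : Con A → Con A) (θ : Con A) {n : ℕ} (θs : Fin n → Con A) :
    Set (A.carrier × A.carrier) :=
  {pr | ∃ (N : ℕ) (g : (Fin N → A.carrier) → A.carrier), IsPolynomial A g ∧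
    ∃ (gr : Fin N → Fin n) (a b : Fin N → A.carrier),
      (∀ i, (θs (gr i)).r (a i) (b i)) ∧
      (∀ ε : Fin n → Bool, (∃ j, ε j = false) →
        (F θ).r (g (fun i => if ε (gr i) then b i else a i)) (g a)) ∧
      pr = (g b, g a)}

/-- Homomorphisms of algebras. -/
def IsHom (A B : Algebra σ) (h : A.carrier → B.carrier) : Prop :=
  ∀ (o : σ.ops) (x : Fin (σ.arity o) → A.carrier),
    h (A.interp o x) = B.interp o (fun i => h (x i))

/-- The product of a family of algebras. -/
def prodAlg {I : Type} (As : I → Algebra σ) : Algebra σ where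
  carrier := ∀ i, (As i).carrier
  interp o x i := (As i).interp o (fun j => x j i)

/-- The subuniverse generated by a subset. -/
inductive Gen (A : Algebra σ) (S : Set A.carrier) : A.carrier → Prop
  | base {a : A.carrier} : a ∈ S → Gen A S a
  | app (o : σ.ops) (x : Fin (σ.arity o) → A.carrier) :
      (∀ i, Gen A S (x i)) → Gen A S (A.interp o x)

/-- `A` possesses a Taylor term. -/
def HasTaylorTerm (A : Algebra σ) : Prop :=
  ∃ (n : ℕ) (t : Term σ (Fin n)), 1 ≤ n ∧
    (∀ a : A.carrier, t.eval A (fun _ => a) = a) ∧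
    ∀ i : Fin n, ∃ u v : Fin n → Bool, u i = true ∧ v i = false ∧
      ∀ x y : A.carrier,
        t.eval A (fun j => if u j then x else y) = t.eval A (fun j => if v j then x else y)

/-- The variety `V` possesses a Taylor term. -/
def VarietyHasTaylorTerm (V : Algebra σ → Prop) : Prop :=
  ∃ (n : ℕ) (t : Term σ (Fin n)), 1 ≤ n ∧
    (∀ A : Algebra σ, V A → ∀ a : A.carrier, t.eval A (fun _ => a) = a) ∧
    ∀ i : Fin n, ∃ u v : Fin n → Bool, u i = true ∧ v i = false ∧
      ∀ A : Algebra σ, V A → ∀ x y : A.carrier,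
        t.eval A (fun j => if u j then x else y) = t.eval A (fun j => if v j then x else y)

/-- `Ξ(θ)`: the smallest set of congruences containing `θ` and closed under
higher commutators (of arity at least 2) of its members. -/
inductive Xi {A : Algebra σ} (θ : Con A) : Con A → Prop
  | base : Xi θ θ
  | comm {k : ℕ} (γ : Fin (k + 2) → Con A) : (∀ j, Xi θ (γ j)) → Xi θ (commList γ)

/-- An expanded loop on the carrier `α` with extra operations indexed by `ι`. -/
structure ExpLoop (ι : Type) (ar : ι → ℕ) (α : Type) : Type where
  mul : α → α → α
  ldiv : α → α → α
  rdiv : α → α → α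
  zero : α
  extra : (i : ι) → (Fin (ar i) → α) → α
  ldiv_mul : ∀ x y, ldiv x (mul x y) = y
  mul_rdiv : ∀ x y, rdiv (mul x y) y = x
  mul_ldiv : ∀ x y, mul x (ldiv x y) = y
  rdiv_mul : ∀ x y, mul (rdiv x y) y = x
  zero_mul : ∀ x, mul zero x = x
  mul_zero : ∀ x, mul x zero = x

/-- Operation symbols of an expanded loop. -/
inductive LoopOp (ι : Type) : Type
  | mul | ldiv | rdiv | zero
  | extra : ι → LoopOp ι

/-- The signature of an expanded loop. -/
@[reducible] def loopSig (ι : Type) (ar : ι → ℕ) : Signature where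
  ops := LoopOp ι
  arity o := match o with
    | .mul => 2
    | .ldiv => 2
    | .rdiv => 2
    | .zero => 0
    | .extra i => ar i

/-- The algebra underlying an expanded loop. -/
def ExpLoop.toAlgebra {ι : Type} {ar : ι → ℕ} {α : Type} (L : ExpLoop ι ar α) :
    Algebra (loopSig ι ar) where
  carrier := α
  interp o := match o with
    | .mul => fun x => L.mul (x 0) (x 1)
    | .ldiv => fun x => L.ldiv (x 0) (x 1)
    | .rdiv => fun x => L.rdiv (x 0) (x 1)
    | .zero => fun _ => L.zero
    | .extra i => L.extra i

/-- An expanded loop is of `n`-type. -/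
def ExpLoop.IsNType {ι : Type} {ar : ι → ℕ} {α : Type} (L : ExpLoop ι ar α) (n : ℕ) : Prop :=
  (∀ p : Σ k : ℕ, (Fin k → α) → α,
      (∃ i : ι, p = ⟨ar i, L.extra i⟩) ↔
        (1 ≤ p.1 ∧ p.1 ≤ n - 1 ∧ IsPolynomial L.toAlgebra p.2 ∧
          Absorbs L.toAlgebra p.2 (fun _ => L.zero) L.zero)) ∧
  (∀ f : (Fin (n - 1) → α) → α,
      IsPolynomial L.toAlgebra f → Absorbs L.toAlgebra f (fun _ => L.zero) L.zero →
      ∀ (j : Fin (n - 1)) (x : Fin (n - 1) → α) (u v : α),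
        f (Function.update x j (L.mul u v)) =
          L.mul (f (Function.update x j u)) (f (Function.update x j v))) ∧
  (∀ k : ℕ, 2 ≤ k → k < n →
      commList (Fin.snoc (fun _ : Fin (n - k) => (Con.top : Con L.toAlgebra))
        (nfold Con.top k)) = Con.bot)

/-- `A` is polynomially equivalent to an `n`-type expanded loop on the same carrier. -/
def PolyEquivNTypeLoop (A : Algebra σ) (n : ℕ) : Prop :=
  ∃ (ι : Type) (ar : ι → ℕ) (L : ExpLoop ι ar A.carrier),
    L.IsNType n ∧
    ∀ (k : ℕ) (f : (Fin k → A.carrier) → A.carrier),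
      IsPolynomial A f ↔ IsPolynomial L.toAlgebra f

/-- Left-associated product of a list with initial value `c`. -/
def lprodFrom {β : Type} (mul : β → β → β) (c : β) (l : List β) : β := List.foldl mul c l

/-- Left-associated product of a list (with a default value for the empty list). -/
def lprodList {β : Type} (mul : β → β → β) (dflt : β) : List β → β
  | [] => dflt
  | a :: l => List.foldl mul a l

/-- Left-associated product of a nonempty tuple. -/
def lassoc {β : Type} (mul : β → β → β) : {m : ℕ} → (Fin (m + 1) → β) → β
  | 0, y => y 0
  | (m+1), y => mul (lassoc mul (Fin.init y)) (y (Fin.last (m+1)))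

/-- `A` has a representation of degree `n`. -/
def HasRepOfDegree (A : Algebra σ) (n : ℕ) : Prop :=
  ∃ (z : A.carrier) (r : (Fin 2 → A.carrier) → A.carrier),
    IsPolynomial A r ∧ (∀ x : A.carrier, r ![z, x] = x) ∧ (∀ x : A.carrier, r ![x, z] = x) ∧
    ∀ (k : ℕ) (f : (Fin k → A.carrier) → A.carrier), IsPolynomial A f →
      ∃ (c : A.carrier) (R : ℕ → (Fin k → A.carrier) → A.carrier),
        (∀ m : ℕ, 1 ≤ m → m ≤ min k n →
          ∃ (l : List (Finset (Fin k)))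
            (t : (S : Finset (Fin k)) → (Fin S.card → A.carrier) → A.carrier),
            l.Nodup ∧
            (∀ S : Finset (Fin k), S ∈ l ↔ S.card = m) ∧
            (∀ S ∈ l, IsPolynomial A (t S) ∧ Absorbs A (t S) (fun _ => z) z) ∧
            (∀ x : Fin k → A.carrier,
              R m x = lprodList (fun u v => r ![u, v]) z
                (l.map (fun S => t S (fun j => x ((S.orderIsoOfFin rfl j).val)))))) ∧
        ∀ x : Fin k → A.carrier,
          f x = lprodFrom (fun u v => r ![u, v]) c
            ((List.range' 1 (min k n)).map (fun m => R m x))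

/-- Products of `0`-absorbing polynomials (of arities between `lo` and `hi`)
in a given set of variables. -/
inductive ProdOfAbs {ι : Type} {ar : ι → ℕ} {α : Type} (L : ExpLoop ι ar α)
    (lo hi : ℕ) {I : Type} : ((I → α) → α) → Prop
  | base {p : ℕ} (h : (Fin p → α) → α) (sel : Fin p → I) :
      lo ≤ p → p ≤ hi → IsPolynomial L.toAlgebra h →
      Absorbs L.toAlgebra h (fun _ => L.zero) L.zero →
      ProdOfAbs L lo hi (fun v => h (fun j => v (sel j)))
  | mul {F G : (I → α) → α} :
      ProdOfAbs L lo hi F → ProdOfAbs L lo hi G →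
      ProdOfAbs L lo hi (fun v => L.mul (F v) (G v))

/-- The terms `q_m` (for `m ≥ 2`, `qSeq q (m-2)` is `q_m`):
`q₂ := q`, `q_{m+1}(x,y,z) := q(x, q_m(x,y,y), q_m(x,y,z))`. -/
def qSeq (q : Term σ (Fin 3)) : ℕ → Term σ (Fin 3)
  | 0 => q
  | (k+1) => q.subst ![Term.var 0, (qSeq q k).subst ![Term.var 0, Term.var 1, Term.var 1], qSeq q k]

/-!
Let `M(θ₁,…,θₙ)` be the set of cubes `Q : {0,1}ⁿ → A` obtained by evaluating a polynomial at the
vertices of some `{ā₁,b̄₁}×⋯×{āₙ,b̄ₙ}` with `āᵢ θᵢ b̄ᵢ`. Both sides are determined by `M`: a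
congruence `δ` centralizes `θ₁,…,θₙ` when, for every cube in `M`, equality modulo `δ` along all but
one of the edges in a given direction `l` forces it along the remaining edge, the one ending at
`(1,…,1)`, while `T` consists of the pairs `(Q(1,…,1), Q(0,…,0))` for the cubes constant modulo
`f(θ)` away from `(1,…,1)`. It therefore suffices that a congruence `δ ≥ f(θ)` centralizes if and
only if `T ⊆ δ`.

Modulo `f(θ)` the term `p` is a Mal'cev operation on `θ`-classes, and for a vertex `v` the cube
`ε ↦ p(Q(ε), Q(ε with εⱼ := 0), Q(v))` is again in `M`. Modulo `f(θ)` it takes the value `Q(v)`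
wherever `εⱼ = 0`. One such step in direction `l` turns a cube as in the centralizer condition into
one that is constant modulo `δ` away from `(1,…,1)`; further steps in every direction make it
constant there even modulo `f(θ)`. With `v` the origin of the remaining edge in the first step and
`v = (0,…,0)` afterwards, the values at `(0,…,0)` and `(1,…,1)` stay `δ`-related to the two ends of
that edge.
-/

namespace Con

variable {A : Algebra σ}

theorem le_antisymm {c d : Con A} (hcd : c ≤ d) (hdc : d ≤ c) : c = d := by
  obtain ⟨r, _⟩ := c
  obtain ⟨s, _⟩ := d
  obtain rfl : r = s := funext₂ fun a b => propext ⟨hcd a b, hdc a b⟩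
  rfl

theorem bot_le (c : Con A) : bot ≤ c := by
  rintro a _ rfl
  exact c.refl a

theorem sInf_setOf_le (c : Con A) : sInf {δ | c ≤ δ} = c :=
  le_antisymm (fun _ _ h => h c fun _ _ => id) fun _ _ h _ hδ => hδ _ _ h

theorem conGen_le_iff {S : Set (A.carrier × A.carrier)} {c : Con A} :
    conGen S ≤ c ↔ ∀ pr ∈ S, c.r pr.1 pr.2 :=
  ⟨fun h pr hpr => h _ _ fun _ hS => hS pr hpr, fun h _ _ hab => hab c h⟩

theorem sup_le_iff {c d e : Con A} : sup c d ≤ e ↔ c ≤ e ∧ d ≤ e :=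
  conGen_le_iff.trans
    ⟨fun h => ⟨fun a b hab => h (a, b) (.inl hab), fun a b hab => h (a, b) (.inr hab)⟩,
      fun ⟨hc, hd⟩ pr => Or.rec (hc pr.1 pr.2) (hd pr.1 pr.2)⟩

theorem bot_sup (c : Con A) : sup bot c = c :=
  le_antisymm (sup_le_iff.mpr ⟨bot_le c, fun _ _ => id⟩) le_sup_right

theorem compat_eval (c : Con A) {X : Type} (t : Term σ X) {v w : X → A.carrier}
    (h : ∀ x, c.r (v x) (w x)) : c.r (t.eval A v) (t.eval A w) := by
  induction t with
  | var x => exact h x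
  | app o t ih => exact c.compat o _ _ ih

theorem compat_eval₃ (c : Con A) (t : Term σ (Fin 3)) {x y z x' y' z' : A.carrier}
    (hx : c.r x x') (hy : c.r y y') (hz : c.r z z') :
    c.r (t.eval A ![x, y, z]) (t.eval A ![x', y', z']) :=
  c.compat_eval t <| by simp [Fin.forall_fin_succ, hx, hy, hz]

end Con

section Polynomials

variable {A : Algebra σ} {n k : ℕ} {f : (Fin n → A.carrier) → A.carrier}

theorem IsPolynomial.rel (hf : IsPolynomial A f) (c : Con A) {x y : Fin n → A.carrier}
    (h : ∀ i, c.r (x i) (y i)) : c.r (f x) (f y) := by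
  induction hf with
  | proj i => exact h i
  | const a => exact c.refl a
  | app o g _ ih => exact c.compat o _ _ fun j => ih j

theorem IsPolynomial.comp (hf : IsPolynomial A f) {s : Fin n → (Fin k → A.carrier) → A.carrier}
    (hs : ∀ i, IsPolynomial A (s i)) : IsPolynomial A fun x => f fun i => s i x := by
  induction hf with
  | proj i => exact hs i
  | const a => exact .const a
  | app o g _ ih => exact .app o (fun j x => g j fun i => s i x) ih

theorem Term.isPolynomial_eval {X : Type} (t : Term σ X)
    {s : X → (Fin k → A.carrier) → A.carrier} (hs : ∀ i, IsPolynomial A (s i)) :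
    IsPolynomial A fun x => t.eval A fun i => s i x := by
  induction t with
  | var x => exact hs x
  | app o t ih => exact .app o (fun j x => (t j).eval A fun i => s i x) ih

theorem Term.isPolynomial_eval₃ (t : Term σ (Fin 3)) {f g h : (Fin n → A.carrier) → A.carrier}
    (hf : IsPolynomial A f) (hg : IsPolynomial A g) (hh : IsPolynomial A h) :
    IsPolynomial A fun x => t.eval A ![f x, g x, h x] := by
  have hs : ∀ i, IsPolynomial A (![f, g, h] i) := by simp [Fin.forall_fin_succ, hf, hg, hh]
  convert t.isPolynomial_eval hs using 4 with x i
  fin_cases i <;> rfl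

end Polynomials

section ChooseVec

variable {β : Type} {N n : ℕ} (gr : Fin N → Fin n) (a b : Fin N → β)

theorem chooseVec_bot : chooseVec gr a b ⊥ = a := rfl

theorem chooseVec_top : chooseVec gr a b ⊤ = b := rfl

theorem chooseVec_update_false (j : Fin n) (ε : Fin n → Bool) :
    chooseVec gr a b (Function.update ε j false) =
      fun i => if gr i = j then a i else chooseVec gr a b ε i := by
  funext i
  by_cases h : gr i = j <;> simp [chooseVec, h]

end ChooseVec

/-- The set `M(θ₁,…,θₙ)` of matrices of commutator theory: `Q` lists the values of a polynomial at
the vertices of `{ā₁,b̄₁}×⋯×{āₙ,b̄ₙ}`, where `āᵢ θᵢ b̄ᵢ`. The `i`-th bit of a vertex is `true` when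
`b̄ᵢ` is chosen. -/
def IsCube {A : Algebra σ} {n : ℕ} (θs : Fin n → Con A) (Q : (Fin n → Bool) → A.carrier) : Prop :=
  ∃ (N : ℕ) (g : (Fin N → A.carrier) → A.carrier), IsPolynomial A g ∧
    ∃ (gr : Fin N → Fin n) (a b : Fin N → A.carrier),
      (∀ i, (θs (gr i)).r (a i) (b i)) ∧ Q = fun ε => g (chooseVec gr a b ε)

/-- Absorption on a cube: modulo `γ`, every vertex with a coordinate `0` in some direction of `S`
has the same value as the vertex `(0,…,0)`. -/
def AbsorbsOn {A : Algebra σ} {ι : Type} (γ : Con A) (S : Set ι)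
    (Q : (ι → Bool) → A.carrier) : Prop :=
  ∀ ε : ι → Bool, (∃ j ∈ S, ε j = false) → γ.r (Q ε) (Q ⊥)

/-- The centralizer condition `C(θ₁,…,θₙ;δ)` with the coordinate `l` in the role of the last one.
For `n = 1` there are no other coordinates, and it says `θ₁ ≤ δ`, in accordance with `[θ₁] = θ₁`. -/
def CentralizesAt {A : Algebra σ} {n : ℕ} (θs : Fin n → Con A) (l : Fin n) (δ : Con A) : Prop :=
  ∀ Q : (Fin n → Bool) → A.carrier, IsCube θs Q →
    (∀ ε : Fin n → Bool, (∃ j ≠ l, ε j = false) →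
      δ.r (Q (Function.update ε l false)) (Q (Function.update ε l true))) →
    δ.r (Q (Function.update ⊤ l false)) (Q ⊤)

/-- The term `p` satisfies the Mal'cev identities modulo `η` on the classes of `θ`; a weak `f`-term
does so for `η = f(θ)`. -/
def IsMalcevModulo {A : Algebra σ} (p : Term σ (Fin 3)) (θ η : Con A) : Prop :=
  ∀ a b : A.carrier, θ.r a b → η.r (p.eval A ![a, b, b]) a ∧ η.r a (p.eval A ![b, b, a])

/-- The cube `ε ↦ p(Q(ε), Q(ε with εⱼ := 0), Q(v))`, whose values where `εⱼ = 0` are all `Q(v)` if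
`p` is a Mal'cev term. -/
def absorbStep {A : Algebra σ} {ι : Type} [DecidableEq ι] (p : Term σ (Fin 3)) (v : ι → Bool)
    (j : ι) (Q : (ι → Bool) → A.carrier) : (ι → Bool) → A.carrier :=
  fun ε => p.eval A ![Q ε, Q (Function.update ε j false), Q v]

section Commutator

variable {A : Algebra σ} {m n : ℕ}

theorem centralizesAt_fin_one_iff {θs : Fin 1 → Con A} {l : Fin 1} {δ : Con A} :
    CentralizesAt θs l δ ↔ θs 0 ≤ δ := by
  obtain rfl := Fin.eq_zero l
  constructor
  · intro h a b hab
    exact h _ ⟨1, fun x => x 0, .proj 0, fun _ => 0, fun _ => a, fun _ => b, fun _ => hab, rfl⟩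
      fun _ ⟨j, hj, _⟩ => absurd (Fin.eq_zero j) hj
  · rintro h _ ⟨N, g, hg, gr, a, b, hab, rfl⟩ -
    have hvertex : Function.update (⊤ : Fin 1 → Bool) 0 false = ⊥ := by decide
    simp only [hvertex, chooseVec_bot, chooseVec_top]
    refine hg.rel δ fun i => h _ _ ?_
    rw [← Fin.eq_zero (gr i)]
    exact hab i

theorem lastCases_castSucc {α : Type} (x : Fin (n + 1) → α) (y : α) :
    (Fin.lastCases (motive := fun _ => α) y fun j => x j.castSucc) =
      Function.update x (Fin.last n) y := by
  funext i
  cases i using Fin.lastCases <;> simp [Fin.castSucc_ne_last]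

theorem centralizesAt_last_iff {θs : Fin (n + 1) → Con A} {δ : Con A} :
    CentralizesAt θs (Fin.last n) δ ↔
      Centralizes (fun j => θs j.castSucc) (θs (Fin.last n)) δ := by
  have hθs : Fin.lastCases (motive := fun _ => Con A) (θs (Fin.last n)) (fun j => θs j.castSucc) =
      θs := by
    rw [lastCases_castSucc, Function.update_eq_self]
  have hone (y : Bool) : Fin.lastCases (motive := fun _ : Fin (n + 1) => Bool) y (fun _ => true) =
      Function.update ⊤ (Fin.last n) y := lastCases_castSucc ⊤ y
  have htop : Function.update ⊤ (Fin.last n) true = (⊤ : Fin (n + 1) → Bool) :=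
    Function.update_eq_self _ _
  simp only [Centralizes, hθs, hone, htop]
  constructor
  · intro h N g hg gr a b hab hedges
    refine h _ ⟨N, g, hg, gr, a, b, hab, rfl⟩ fun ε ⟨j, hjl, hj⟩ => ?_
    simp only [← lastCases_castSucc ε]
    refine hedges _ fun hε => ?_
    simpa [hj] using congrFun hε (j.castPred hjl)
  · rintro h _ ⟨N, g, hg, gr, a, b, hab, rfl⟩ hedges
    refine h N g hg gr a b hab fun ε hε => ?_
    obtain ⟨j, hj⟩ := Function.ne_iff.mp hε
    have hedge := hedges (Fin.lastCases (motive := fun _ => Bool) true ε)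
      ⟨j.castSucc, Fin.castSucc_ne_last j, by simpa using hj⟩
    simpa only [← lastCases_castSucc, Fin.lastCases_castSucc] using hedge

theorem commList_eq_sInf_centralizesAt (θs : Fin (m + 1) → Con A) :
    commList θs = Con.sInf {δ | CentralizesAt θs (Fin.last m) δ} := by
  cases m with
  | zero => simp only [centralizesAt_fin_one_iff, Con.sInf_setOf_le, commList]
  | succ m => simp only [centralizesAt_last_iff, commList, commutator]

theorem mem_tSet_iff {F : Con A → Con A} {θ : Con A} {θs : Fin n → Con A}
    {pr : A.carrier × A.carrier} :
    pr ∈ TSet A F θ θs ↔ ∃ Q, IsCube θs Q ∧ AbsorbsOn (F θ) Set.univ Q ∧ pr = (Q ⊤, Q ⊥) := by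
  constructor
  · rintro ⟨N, g, hg, gr, a, b, hab, habs, rfl⟩
    exact ⟨_, ⟨N, g, hg, gr, a, b, hab, rfl⟩, fun ε ⟨j, _, hj⟩ => habs ε ⟨j, hj⟩, rfl⟩
  · rintro ⟨_, ⟨N, g, hg, gr, a, b, hab, rfl⟩, habs, rfl⟩
    exact ⟨N, g, hg, gr, a, b, hab, fun ε ⟨j, hj⟩ => habs ε ⟨j, trivial, hj⟩, rfl⟩

end Commutator

section AbsorbStep

variable {A : Algebra σ} {p : Term σ (Fin 3)} {θ η γ δ : Con A}

theorem IsMalcevModulo.mono (hp : IsMalcevModulo p θ η) (h : η ≤ γ) : IsMalcevModulo p θ γ :=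
  fun a b hab => ⟨h _ _ (hp a b hab).1, h _ _ (hp a b hab).2⟩

theorem IsCube.rel {n : ℕ} {θs : Fin n → Con A} {Q : (Fin n → Bool) → A.carrier}
    (hQ : IsCube θs Q) (hθs : ∀ i, θs i ≤ θ) (ε ε' : Fin n → Bool) : θ.r (Q ε) (Q ε') := by
  obtain ⟨N, g, hg, gr, a, b, hab, rfl⟩ := hQ
  have rel_base (ε : Fin n → Bool) : θ.r (g a) (g (chooseVec gr a b ε)) := by
    refine hg.rel θ fun i => ?_
    unfold chooseVec
    split_ifs
    exacts [hθs _ _ _ (hab i), θ.refl _]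
  exact θ.trans (θ.symm (rel_base ε)) (rel_base ε')

theorem isCube_absorbStep {n : ℕ} {θs : Fin n → Con A} {Q : (Fin n → Bool) → A.carrier}
    (hQ : IsCube θs Q) (p : Term σ (Fin 3)) (v : Fin n → Bool) (j : Fin n) :
    IsCube θs (absorbStep p v j Q) := by
  obtain ⟨N, g, hg, gr, a, b, hab, rfl⟩ := hQ
  have hreset : IsPolynomial A fun x => g fun i => if gr i = j then a i else x i := by
    refine hg.comp (s := fun i x => if gr i = j then a i else x i) fun i => ?_
    by_cases h : gr i = j
    · simpa only [h, if_true] using .const (a i)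
    · simpa only [h, if_false] using .proj i
  refine ⟨N, _, p.isPolynomial_eval₃ hg hreset (.const (g (chooseVec gr a b v))), gr, a, b, hab, ?_⟩
  funext ε
  simp only [absorbStep, chooseVec_update_false]

variable {ι : Type} [DecidableEq ι] {Q : (ι → Bool) → A.carrier} {v ε : ι → Bool} {j : ι}

theorem absorbStep_rel_apply_vertex (hp : IsMalcevModulo p θ γ) (hQ : ∀ ε ε', θ.r (Q ε) (Q ε'))
    (h : γ.r (Q ε) (Q (Function.update ε j false))) : γ.r (absorbStep p v j Q ε) (Q v) :=
  γ.trans (γ.compat_eval₃ p h (γ.refl _) (γ.refl _)) (γ.symm (hp _ _ (hQ v _)).2)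

theorem absorbStep_rel_self (hp : IsMalcevModulo p θ γ) (hQ : ∀ ε ε', θ.r (Q ε) (Q ε'))
    (h : γ.r (Q (Function.update ε j false)) (Q v)) : γ.r (absorbStep p v j Q ε) (Q ε) :=
  γ.trans (γ.compat_eval₃ p (γ.refl _) h (γ.refl _)) (hp _ _ (hQ ε v)).1

theorem rel_update_false (γ : Con A) (Q : (ι → Bool) → A.carrier) (h : ε j = false) :
    γ.r (Q ε) (Q (Function.update ε j false)) := by
  rw [← h, Function.update_eq_self]
  exact γ.refl _

theorem absorbStep_bot_rel (hp : IsMalcevModulo p θ γ) (hQ : ∀ ε ε', θ.r (Q ε) (Q ε')) :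
    γ.r (absorbStep p v j Q ⊥) (Q v) :=
  absorbStep_rel_apply_vertex hp hQ (rel_update_false γ Q rfl)

theorem absorbsOn_insert_absorbStep (hp : IsMalcevModulo p θ γ) (hQ : ∀ ε ε', θ.r (Q ε) (Q ε'))
    {S : Set ι} (h : AbsorbsOn γ S Q) (j : ι) :
    AbsorbsOn γ (insert j S) (absorbStep p ⊥ j Q) := by
  rintro ε ⟨i, hi, hεi⟩
  refine γ.trans (absorbStep_rel_apply_vertex hp hQ ?_) (γ.symm (absorbStep_bot_rel hp hQ))
  rcases hi with rfl | hi
  · exact rel_update_false γ Q hεi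
  · have hupdate : Function.update ε j false i = false := by
      rw [Function.update_apply, hεi, ite_self]
    exact γ.trans (h ε ⟨i, hi, hεi⟩) (γ.symm (h _ ⟨i, hi, hupdate⟩))

theorem absorbsOn_univ_absorbStep (hp : IsMalcevModulo p θ δ) (hQ : ∀ ε ε', θ.r (Q ε) (Q ε'))
    {l : ι} (h : ∀ ε : ι → Bool, (∃ j ≠ l, ε j = false) →
      δ.r (Q (Function.update ε l false)) (Q (Function.update ε l true))) :
    AbsorbsOn δ Set.univ (absorbStep p v l Q) := by
  rintro ε ⟨j, -, hj⟩
  refine δ.trans (absorbStep_rel_apply_vertex hp hQ ?_) (δ.symm (absorbStep_bot_rel hp hQ))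
  cases hl : ε l with
  | false => exact rel_update_false δ Q hl
  | true =>
    have hjl : j ≠ l := by
      rintro rfl
      simp [hj] at hl
    have hedge := h ε ⟨j, hjl, hj⟩
    rw [← hl, Function.update_eq_self] at hedge
    exact δ.symm hedge

end AbsorbStep

section Centralizer

variable {A : Algebra σ} {p : Term σ (Fin 3)} {θ η δ : Con A} {n : ℕ} {θs : Fin n → Con A}

theorem IsCube.exists_absorbsOn {Q : (Fin n → Bool) → A.carrier} (hQ : IsCube θs Q)
    (hp : IsMalcevModulo p θ η) (hθs : ∀ i, θs i ≤ θ) (hηδ : η ≤ δ)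
    (hδ : AbsorbsOn δ Set.univ Q) (S : Finset (Fin n)) :
    ∃ Q', IsCube θs Q' ∧ AbsorbsOn η S Q' ∧ AbsorbsOn δ Set.univ Q' ∧
      δ.r (Q' ⊥) (Q ⊥) ∧ δ.r (Q' ⊤) (Q ⊤) := by
  induction S using Finset.induction_on with
  | empty => exact ⟨Q, hQ, by simp [AbsorbsOn], hδ, δ.refl _, δ.refl _⟩
  | insert j S _ ih =>
    obtain ⟨R, hR, hRη, hRδ, hbot, htop⟩ := ih
    have hRθ := hR.rel hθs
    have hpδ := hp.mono hηδ
    have hface : δ.r (R (Function.update ⊤ j false)) (R ⊥) := hRδ _ ⟨j, trivial, by simp⟩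
    refine ⟨absorbStep p ⊥ j R, isCube_absorbStep hR p ⊥ j, ?_, ?_,
      δ.trans (absorbStep_bot_rel hpδ hRθ) hbot, δ.trans (absorbStep_rel_self hpδ hRθ hface) htop⟩
    · simpa only [Finset.coe_insert] using absorbsOn_insert_absorbStep hp hRθ hRη j
    · simpa only [Set.insert_eq_of_mem, Set.mem_univ] using
        absorbsOn_insert_absorbStep hpδ hRθ hRδ j

variable {F : Con A → Con A}

theorem IsCube.rel_top_bot_of_absorbsOn {Q : (Fin n → Bool) → A.carrier} (hQ : IsCube θs Q)
    (hp : IsMalcevModulo p θ (F θ)) (hθs : ∀ i, θs i ≤ θ) (hFδ : F θ ≤ δ)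
    (hT : Con.conGen (TSet A F θ θs) ≤ δ) (hδ : AbsorbsOn δ Set.univ Q) :
    δ.r (Q ⊤) (Q ⊥) := by
  obtain ⟨R, hR, hRF, -, hbot, htop⟩ := hQ.exists_absorbsOn hp hθs hFδ hδ Finset.univ
  rw [Finset.coe_univ] at hRF
  have hpair : δ.r (R ⊤) (R ⊥) :=
    Con.conGen_le_iff.mp hT _ (mem_tSet_iff.mpr ⟨R, hR, hRF, rfl⟩)
  exact δ.trans (δ.symm htop) (δ.trans hpair hbot)

theorem CentralizesAt.conGen_tSet_le {l : Fin n} (h : CentralizesAt θs l δ) (hFδ : F θ ≤ δ) :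
    Con.conGen (TSet A F θ θs) ≤ δ := by
  refine Con.conGen_le_iff.mpr fun pr hpr => ?_
  obtain ⟨Q, hQ, habs, rfl⟩ := mem_tSet_iff.mp hpr
  have rel_bot (ε : Fin n → Bool) (hε : ∃ j, ε j = false) : δ.r (Q ε) (Q ⊥) :=
    hFδ _ _ (habs ε (by simpa using hε))
  have hedge : δ.r (Q (Function.update ⊤ l false)) (Q ⊤) := by
    refine h Q hQ fun ε ⟨j, hjl, hj⟩ => ?_
    exact δ.trans (rel_bot _ ⟨l, by simp⟩) (δ.symm (rel_bot _ ⟨j, by simp [hjl, hj]⟩))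
  exact δ.trans (δ.symm hedge) (rel_bot _ ⟨l, by simp⟩)

theorem centralizesAt_of_conGen_tSet_le (hp : IsMalcevModulo p θ (F θ)) (hθs : ∀ i, θs i ≤ θ)
    (hFδ : F θ ≤ δ) (hT : Con.conGen (TSet A F θ θs) ≤ δ) (l : Fin n) :
    CentralizesAt θs l δ := by
  intro Q hQ hedges
  have hpδ := hp.mono hFδ
  have hQθ := hQ.rel hθs
  let v : Fin n → Bool := Function.update ⊤ l false
  have habs : AbsorbsOn δ Set.univ (absorbStep p v l Q) :=
    absorbsOn_univ_absorbStep hpδ hQθ hedges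
  have htop : δ.r (absorbStep p v l Q ⊤) (Q ⊤) := absorbStep_rel_self hpδ hQθ (δ.refl _)
  have hbot : δ.r (absorbStep p v l Q ⊥) (Q v) := absorbStep_bot_rel hpδ hQθ
  have htop_bot := (isCube_absorbStep hQ p v l).rel_top_bot_of_absorbsOn hp hθs hFδ hT habs
  exact δ.trans (δ.symm hbot) (δ.trans (δ.symm htop_bot) htop)

end Centralizer

theorem tset_generates_commutator_general {A : Algebra σ} {p : Term σ (Fin 3)} {F : Con A → Con A}
    {θ : Con A} {n : ℕ} {θs : Fin n → Con A} (hp : IsMalcevModulo p θ (F θ))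
    (hθs : ∀ i, θs i ≤ θ) (l : Fin n) :
    Con.sup (F θ) (Con.conGen (TSet A F θ θs)) =
      Con.sInf {δ | F θ ≤ δ ∧ CentralizesAt θs l δ} := by
  rw [← Con.sInf_setOf_le (Con.sup _ _)]
  congr 1 with δ
  exact Con.sup_le_iff.trans <| and_congr_right fun hFδ =>
    ⟨fun hT => centralizesAt_of_conGen_tSet_le hp hθs hFδ hT l, fun h => h.conGen_tSet_le hFδ⟩

/-- Proposition 5.7 of "On Supernilpotent Algebras": in a variety with a weak
`f`-term, if each `θᵢ ≤ θ` and `f(θ) = 0`, then the congruence generated by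
`T^θ_{n,f}(θ₁,…,θₙ)` is exactly the higher commutator `[θ₁,…,θₙ]`. -/
theorem tset_generates_commutator {σ : Signature} (V : Algebra σ → Prop)
    (hV : IsVariety V) (p : Term σ (Fin 3)) (hp : HasWeakFTermVariety V p)
    (A : Algebra σ) (hA : V A)
    (F : Con A → Con A) (hFmono : MonotoneCon F) (hF : IsWeakFTerm A F p)
    {m : ℕ} (θ : Con A) (θs : Fin (m + 1) → Con A)
    (hθs : ∀ i, θs i ≤ θ) (hbot : F θ = Con.bot) :
    Con.conGen (TSet A F θ θs) = commList θs := by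
  have h := tset_generates_commutator_general (hF θ) hθs (Fin.last m)
  simpa only [hbot, Con.bot_sup, Con.bot_le, true_and,
    ← commList_eq_sInf_centralizesAt] using h

end UA
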